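/- For every R ≥ R₀ one has 𝓔(R) ≤ 𝓔(R₀); moreover the spacetime estimate ∫_{R₀}^{∞} ∫₀^{2π} [ (2/R) (∂_R U)²(R,θ) + (e^{4U(R,θ)}/(2R³)) (∂_θ A)²(R,θ) ] dθ dR ≤ 𝓔(R₀) holds. -/

import Mathlib

open Real MeasureTheory Set

/-- Partial derivative with respect to the first (time) variable `R`. -/
noncomputable def pdR (f : ℝ → ℝ → ℝ) (R θ : ℝ) : ℝ := deriv (fun r => f r θ) R

/-- Partial derivative with respect to the second (space) variable `θ`. -/
noncomputable def pdT (f : ℝ → ℝ → ℝ) (R θ : ℝ) : ℝ := deriv (fun t => f R t) θ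

/-!
Multiplying the equation for `U` by `2 ∂_R U / R` and the one for `A` by `e^{4U} ∂_R A / (2R)` and
adding gives the local law `∂_R e - ∂_θ F = -d`, where `e` is the energy density, the flux `F` is
`2π`-periodic in `θ` and `d ≥ 0` is the integrand of the spacetime estimate. Integrated over
`[R₀, R] × [0, 2π]` by the divergence theorem, this becomes `𝓔(R) + ∫∫ d = 𝓔(R₀)`. Both claims
follow from `d ≥ 0` and `𝓔(R) ≥ 0`, letting `R → ∞` in the second.
-/

open Filter

section PartialDerivatives

variable {f : ℝ → ℝ → ℝ} {R θ c : ℝ}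

lemma hasDerivAt_fderiv_uncurry_left (hf : DifferentiableAt ℝ (Function.uncurry f) (R, θ)) :
    HasDerivAt (fun r => f r θ) (fderiv ℝ (Function.uncurry f) (R, θ) (1, 0)) R :=
  HasFDerivAt.comp_hasDerivAt R (f := fun r => (r, θ)) hf.hasFDerivAt
    ((hasDerivAt_id R).prodMk (hasDerivAt_const R θ))

lemma hasDerivAt_fderiv_uncurry_right (hf : DifferentiableAt ℝ (Function.uncurry f) (R, θ)) :
    HasDerivAt (fun t => f R t) (fderiv ℝ (Function.uncurry f) (R, θ) (0, 1)) θ :=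
  HasFDerivAt.comp_hasDerivAt θ (f := fun t => (R, t)) hf.hasFDerivAt
    ((hasDerivAt_const θ R).prodMk (hasDerivAt_id θ))

lemma pdR_eq_fderiv (hf : DifferentiableAt ℝ (Function.uncurry f) (R, θ)) :
    pdR f R θ = fderiv ℝ (Function.uncurry f) (R, θ) (1, 0) :=
  (hasDerivAt_fderiv_uncurry_left hf).deriv

lemma pdT_eq_fderiv (hf : DifferentiableAt ℝ (Function.uncurry f) (R, θ)) :
    pdT f R θ = fderiv ℝ (Function.uncurry f) (R, θ) (0, 1) :=
  (hasDerivAt_fderiv_uncurry_right hf).deriv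

lemma hasDerivAt_pdR (hf : DifferentiableAt ℝ (Function.uncurry f) (R, θ)) :
    HasDerivAt (fun r => f r θ) (pdR f R θ) R :=
  (hasDerivAt_fderiv_uncurry_left hf).differentiableAt.hasDerivAt

lemma hasDerivAt_pdT (hf : DifferentiableAt ℝ (Function.uncurry f) (R, θ)) :
    HasDerivAt (fun t => f R t) (pdT f R θ) θ :=
  (hasDerivAt_fderiv_uncurry_right hf).differentiableAt.hasDerivAt

lemma uncurry_pdR (hf : Differentiable ℝ (Function.uncurry f)) :
    Function.uncurry (pdR f) = fun p => fderiv ℝ (Function.uncurry f) p (1, 0) :=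
  funext fun p => pdR_eq_fderiv (hf p)

lemma uncurry_pdT (hf : Differentiable ℝ (Function.uncurry f)) :
    Function.uncurry (pdT f) = fun p => fderiv ℝ (Function.uncurry f) p (0, 1) :=
  funext fun p => pdT_eq_fderiv (hf p)

lemma contDiff_pdR {m n : WithTop ℕ∞} (hf : ContDiff ℝ n (Function.uncurry f)) (hmn : m + 1 ≤ n) :
    ContDiff ℝ m (Function.uncurry (pdR f)) := by
  rw [uncurry_pdR (hf.differentiable (by rintro rfl; simp at hmn))]
  exact (hf.fderiv_right hmn).clm_apply contDiff_const

lemma contDiff_pdT {m n : WithTop ℕ∞} (hf : ContDiff ℝ n (Function.uncurry f)) (hmn : m + 1 ≤ n) :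
    ContDiff ℝ m (Function.uncurry (pdT f)) := by
  rw [uncurry_pdT (hf.differentiable (by rintro rfl; simp at hmn))]
  exact (hf.fderiv_right hmn).clm_apply contDiff_const

lemma differentiable_pdR (hf : ContDiff ℝ 2 (Function.uncurry f)) :
    Differentiable ℝ (Function.uncurry (pdR f)) :=
  (contDiff_pdR (m := 1) hf (by norm_num)).differentiable one_ne_zero

lemma differentiable_pdT (hf : ContDiff ℝ 2 (Function.uncurry f)) :
    Differentiable ℝ (Function.uncurry (pdT f)) :=
  (contDiff_pdT (m := 1) hf (by norm_num)).differentiable one_ne_zero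

lemma pdR_pdT_comm (hf : ContDiff ℝ 2 (Function.uncurry f)) (R θ : ℝ) :
    pdR (pdT f) R θ = pdT (pdR f) R θ := by
  have hf₁ : Differentiable ℝ (Function.uncurry f) := hf.differentiable two_ne_zero
  have hf₂ : DifferentiableAt ℝ (fderiv ℝ (Function.uncurry f)) (R, θ) :=
    (hf.fderiv_right (m := 1) (by norm_num)).differentiable one_ne_zero _
  have hsymm : IsSymmSndFDerivAt ℝ (Function.uncurry f) (R, θ) :=
    hf.contDiffAt.isSymmSndFDerivAt (by simp)
  rw [pdR_eq_fderiv (differentiable_pdT hf _), pdT_eq_fderiv (differentiable_pdR hf _),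
    uncurry_pdR hf₁, uncurry_pdT hf₁, fderiv_clm_apply hf₂ (differentiableAt_const _),
    fderiv_clm_apply hf₂ (differentiableAt_const _)]
  simpa using hsymm.eq (1, 0) (0, 1)

lemma periodic_pdR (hf : ∀ R, Function.Periodic (f R) c) (R : ℝ) :
    Function.Periodic (pdR f R) c := fun θ => by
  simp only [pdR, fun r => hf r θ]

lemma periodic_pdT (hf : Function.Periodic (f R) c) : Function.Periodic (pdT f R) c := fun θ => by
  simp only [pdT, ← deriv_comp_add_const, hf _]

end PartialDerivatives

lemma integral_add_integral_integral_eq_of_pdR_sub_pdT_eq_neg {e F d : ℝ → ℝ → ℝ} {a b c₁ c₂ : ℝ}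
    (he : ∀ p ∈ uIcc a b ×ˢ uIcc c₁ c₂, DifferentiableAt ℝ (Function.uncurry e) p)
    (hF : ∀ p ∈ uIcc a b ×ˢ uIcc c₁ c₂, DifferentiableAt ℝ (Function.uncurry F) p)
    (hd : ContinuousOn (Function.uncurry d) (uIcc a b ×ˢ uIcc c₁ c₂))
    (hF_bdry : ∀ R ∈ uIcc a b, F R c₂ = F R c₁)
    (hlaw : ∀ R ∈ uIcc a b, ∀ θ ∈ uIcc c₁ c₂, pdR e R θ - pdT F R θ = -d R θ) :
    (∫ θ in c₁..c₂, e b θ) + ∫ R in a..b, ∫ θ in c₁..c₂, d R θ = ∫ θ in c₁..c₂, e a θ := by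
  let e' : ℝ × ℝ → ℝ × ℝ →L[ℝ] ℝ := fderiv ℝ (Function.uncurry e)
  let F' : ℝ × ℝ → ℝ × ℝ →L[ℝ] ℝ := fun p => -fderiv ℝ (Function.uncurry F) p
  have hdiv : EqOn (fun p => e' p (1, 0) + F' p (0, 1)) (fun p => -Function.uncurry d p)
      (uIcc a b ×ˢ uIcc c₁ c₂) := by
    rintro ⟨R, θ⟩ hp
    simpa [e', F', pdR_eq_fderiv (he _ hp), pdT_eq_fderiv (hF _ hp), sub_eq_add_neg]
      using hlaw R hp.1 θ hp.2
  have hint : IntegrableOn (fun p => e' p (1, 0) + F' p (0, 1)) (uIcc a b ×ˢ uIcc c₁ c₂) :=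
    (hd.neg.congr hdiv).integrableOn_compact (isCompact_uIcc.prod isCompact_uIcc)
  have hinterior {p : ℝ × ℝ}
      (hp : p ∈ Ioo (min a b) (max a b) ×ˢ Ioo (min c₁ c₂) (max c₁ c₂) \ ∅) :
      p ∈ uIcc a b ×ˢ uIcc c₁ c₂ :=
    prod_mono Ioo_subset_Icc_self Ioo_subset_Icc_self hp.1
  have hdivergence := integral2_divergence_prod_of_hasFDerivAt_off_countable
    (Function.uncurry e) (fun p => -Function.uncurry F p) e' F' a c₁ b c₂ ∅ countable_empty
    (fun p hp => (he p hp).continuousAt.continuousWithinAt)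
    (fun p hp => (hF p hp).continuousAt.continuousWithinAt.neg)
    (fun p hp => (he p (hinterior hp)).hasFDerivAt)
    (fun p hp => (hF p (hinterior hp)).hasFDerivAt.neg) hint
  have hbulk : ∫ R in a..b, ∫ θ in c₁..c₂, e' (R, θ) (1, 0) + F' (R, θ) (0, 1) =
      -∫ R in a..b, ∫ θ in c₁..c₂, d R θ := by
    simp only [← intervalIntegral.integral_neg]
    exact intervalIntegral.integral_congr fun R hR =>
      intervalIntegral.integral_congr fun θ hθ => hdiv (mk_mem_prod hR hθ)
  have hflux : ∫ R in a..b, -F R c₂ = ∫ R in a..b, -F R c₁ :=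
    intervalIntegral.integral_congr fun R hR => congrArg Neg.neg (hF_bdry R hR)
  simp only [hbulk, Function.uncurry_apply_pair, hflux] at hdivergence
  linarith

lemma continuousOn_intervalIntegral_right {X : Type*} [TopologicalSpace X]
    [FirstCountableTopology X] {f : X → ℝ → ℝ} {s : Set X}
    (hf : ContinuousOn (Function.uncurry f) (s ×ˢ univ)) (a b : ℝ) :
    ContinuousOn (fun x => ∫ t in a..b, f x t) s := by
  rw [continuousOn_iff_continuous_domRestrict]
  refine intervalIntegral.continuous_parametric_intervalIntegral_of_continuous'
    (f := fun (x : s) t => f x t) ?_ a b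
  exact hf.comp_continuous (f := fun p : s × ℝ => ((p.1 : X), p.2)) (by fun_prop)
    fun p => ⟨p.1.2, mem_univ _⟩

lemma lintegral_Ioi_ofReal_le_of_intervalIntegral_le {f : ℝ → ℝ} {a M : ℝ}
    (hf : LocallyIntegrableOn f (Ici a)) (hf_nonneg : ∀ x ∈ Ici a, 0 ≤ f x)
    (hM : ∀ b, a ≤ b → ∫ x in a..b, f x ≤ M) :
    ∫⁻ x in Ioi a, ENNReal.ofReal (f x) ≤ ENNReal.ofReal M := by
  have hmeas : AEMeasurable (fun x => ENNReal.ofReal (f x)) (volume.restrict (Ioi a)) :=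
    (hf.mono_set Ioi_subset_Ici_self).aestronglyMeasurable.aemeasurable.ennreal_ofReal
  have hlim := (aecover_Iic (μ := volume) tendsto_id).restrict (s := Ioi a)
    |>.lintegral_tendsto_of_countably_generated hmeas
  refine le_of_tendsto hlim ?_
  filter_upwards [eventually_ge_atTop a] with b hb
  have hint : IntegrableOn f (Ioc a b) :=
    (hf.integrableOn_compact_subset Icc_subset_Ici_self isCompact_Icc).mono_set Ioc_subset_Icc_self
  have hnonneg : 0 ≤ᵐ[volume.restrict (Ioc a b)] f :=
    (ae_restrict_iff' measurableSet_Ioc).2 (.of_forall fun x hx => hf_nonneg x hx.1.le)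
  rw [id, Measure.restrict_restrict measurableSet_Iic, inter_comm, Ioi_inter_Iic,
    ← ofReal_integral_eq_lintegral_ofReal hint hnonneg, ← intervalIntegral.integral_of_le hb]
  exact ENNReal.ofReal_le_ofReal (hM b hb)

/-- The pair `(U, A)` satisfies the two Gowdy wave equations, in divergence form, at `(R, θ)`. -/
structure IsGowdyAt (U A : ℝ → ℝ → ℝ) (R θ : ℝ) : Prop where
  wave_U : deriv (fun r => r * pdR U r θ) R - deriv (fun t => R * pdT U R t) θ
    = exp (4 * U R θ) / (2 * R) * ((pdR A R θ) ^ 2 - (pdT A R θ) ^ 2)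
  wave_A : deriv (fun r => r⁻¹ * pdR A r θ) R - deriv (fun t => R⁻¹ * pdT A R t) θ
    = 4 / R * (-(pdR U R θ * pdR A R θ) + pdT U R θ * pdT A R θ)

/-- The integrand of the energy `𝓔(R)`. -/
noncomputable def gowdyEnergyDensity (U A : ℝ → ℝ → ℝ) (R θ : ℝ) : ℝ :=
  (pdR U R θ) ^ 2 + (pdT U R θ) ^ 2
    + exp (4 * U R θ) / (4 * R ^ 2) * ((pdR A R θ) ^ 2 + (pdT A R θ) ^ 2)

/-- The flux `F` through `θ = const` in the local law `∂_R e - ∂_θ F = -d` for the energy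
density `e`. -/
noncomputable def gowdyEnergyFlux (U A : ℝ → ℝ → ℝ) (R θ : ℝ) : ℝ :=
  2 * (pdR U R θ * pdT U R θ) + exp (4 * U R θ) / (2 * R ^ 2) * (pdR A R θ * pdT A R θ)

/-- The rate `d` at which energy density is lost, i.e. the integrand of the spacetime estimate. -/
noncomputable def gowdyDissipation (U A : ℝ → ℝ → ℝ) (R θ : ℝ) : ℝ :=
  2 / R * (pdR U R θ) ^ 2 + exp (4 * U R θ) / (2 * R ^ 3) * (pdT A R θ) ^ 2

/-- The energy `𝓔(R)` over one period `[0, c]` of the space variable. -/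
noncomputable def gowdyEnergy (U A : ℝ → ℝ → ℝ) (c R : ℝ) : ℝ :=
  ∫ θ in (0 : ℝ)..c, gowdyEnergyDensity U A R θ

section Gowdy

variable {U A : ℝ → ℝ → ℝ} {R θ c : ℝ}

lemma gowdyEnergyDensity_nonneg (U A : ℝ → ℝ → ℝ) (R θ : ℝ) : 0 ≤ gowdyEnergyDensity U A R θ := by
  unfold gowdyEnergyDensity
  positivity

lemma gowdyDissipation_nonneg (U A : ℝ → ℝ → ℝ) (hR : 0 ≤ R) (θ : ℝ) :
    0 ≤ gowdyDissipation U A R θ := by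
  unfold gowdyDissipation
  positivity

lemma gowdyEnergy_nonneg (U A : ℝ → ℝ → ℝ) (hc : 0 ≤ c) (R : ℝ) : 0 ≤ gowdyEnergy U A c R :=
  intervalIntegral.integral_nonneg hc fun θ _ => gowdyEnergyDensity_nonneg U A R θ

lemma periodic_gowdyEnergyFlux (hUper : ∀ R, Function.Periodic (U R) c)
    (hAper : ∀ R, Function.Periodic (A R) c) (R : ℝ) :
    Function.Periodic (gowdyEnergyFlux U A R) c := fun θ => by
  simp only [gowdyEnergyFlux, hUper R θ, periodic_pdR hUper R θ, periodic_pdT (hUper R) θ,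
    periodic_pdR hAper R θ, periodic_pdT (hAper R) θ]

lemma continuousOn_gowdyDissipation (hU : ContDiff ℝ 1 (Function.uncurry U))
    (hA : ContDiff ℝ 1 (Function.uncurry A)) :
    ContinuousOn (Function.uncurry (gowdyDissipation U A)) {p | p.1 ≠ 0} := by
  have hU₀ : Continuous fun p : ℝ × ℝ => U p.1 p.2 := hU.continuous
  have hUR : Continuous fun p : ℝ × ℝ => pdR U p.1 p.2 :=
    (contDiff_pdR (m := 0) hU (by simp)).continuous
  have hAT : Continuous fun p : ℝ × ℝ => pdT A p.1 p.2 :=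
    (contDiff_pdT (m := 0) hA (by simp)).continuous
  have hne : ∀ p ∈ {p : ℝ × ℝ | p.1 ≠ 0}, p.1 ≠ 0 := fun _ hp => hp
  have hne_cube : ∀ p ∈ {p : ℝ × ℝ | p.1 ≠ 0}, 2 * p.1 ^ 3 ≠ 0 := fun p hp =>
    mul_ne_zero two_ne_zero (pow_ne_zero 3 hp)
  simp only [Function.uncurry_def, gowdyDissipation]
  fun_prop (disch := assumption)

variable (hU : ContDiff ℝ 2 (Function.uncurry U)) (hA : ContDiff ℝ 2 (Function.uncurry A))
include hU hA

lemma differentiableAt_gowdyEnergyDensity {p : ℝ × ℝ} (hp : p.1 ≠ 0) :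
    DifferentiableAt ℝ (Function.uncurry (gowdyEnergyDensity U A)) p := by
  have hU₀ : Differentiable ℝ fun p : ℝ × ℝ => U p.1 p.2 := hU.differentiable two_ne_zero
  have hUR : Differentiable ℝ fun p : ℝ × ℝ => pdR U p.1 p.2 := differentiable_pdR hU
  have hUT : Differentiable ℝ fun p : ℝ × ℝ => pdT U p.1 p.2 := differentiable_pdT hU
  have hAR : Differentiable ℝ fun p : ℝ × ℝ => pdR A p.1 p.2 := differentiable_pdR hA
  have hAT : Differentiable ℝ fun p : ℝ × ℝ => pdT A p.1 p.2 := differentiable_pdT hA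
  have hne : 4 * p.1 ^ 2 ≠ 0 := by positivity
  simp only [Function.uncurry_def, gowdyEnergyDensity]
  fun_prop (disch := assumption)

lemma differentiableAt_gowdyEnergyFlux {p : ℝ × ℝ} (hp : p.1 ≠ 0) :
    DifferentiableAt ℝ (Function.uncurry (gowdyEnergyFlux U A)) p := by
  have hU₀ : Differentiable ℝ fun p : ℝ × ℝ => U p.1 p.2 := hU.differentiable two_ne_zero
  have hUR : Differentiable ℝ fun p : ℝ × ℝ => pdR U p.1 p.2 := differentiable_pdR hU
  have hUT : Differentiable ℝ fun p : ℝ × ℝ => pdT U p.1 p.2 := differentiable_pdT hU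
  have hAR : Differentiable ℝ fun p : ℝ × ℝ => pdR A p.1 p.2 := differentiable_pdR hA
  have hAT : Differentiable ℝ fun p : ℝ × ℝ => pdT A p.1 p.2 := differentiable_pdT hA
  have hne : 2 * p.1 ^ 2 ≠ 0 := by positivity
  simp only [Function.uncurry_def, gowdyEnergyFlux]
  fun_prop (disch := assumption)

lemma pdR_gowdyEnergyDensity (hR : R ≠ 0) :
    pdR (gowdyEnergyDensity U A) R θ =
      2 * pdR U R θ * pdR (pdR U) R θ + 2 * pdT U R θ * pdR (pdT U) R θ
        + exp (4 * U R θ) / (4 * R ^ 2)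
          * ((4 * pdR U R θ - 2 / R) * ((pdR A R θ) ^ 2 + (pdT A R θ) ^ 2)
            + 2 * pdR A R θ * pdR (pdR A) R θ + 2 * pdT A R θ * pdR (pdT A) R θ) := by
  have dU := hasDerivAt_pdR (hU.differentiable two_ne_zero (R, θ))
  have dUR := hasDerivAt_pdR (differentiable_pdR hU (R, θ))
  have dUT := hasDerivAt_pdR (differentiable_pdT hU (R, θ))
  have dAR := hasDerivAt_pdR (differentiable_pdR hA (R, θ))
  have dAT := hasDerivAt_pdR (differentiable_pdT hA (R, θ))
  have dR : HasDerivAt (fun r : ℝ => 4 * r ^ 2) (4 * (2 * R)) R := by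
    simpa using (hasDerivAt_pow 2 R).const_mul 4
  have hderiv := ((dUR.fun_pow 2).fun_add (dUT.fun_pow 2)).fun_add
    (((dU.const_mul 4).exp.fun_div dR (by positivity)).fun_mul
      ((dAR.fun_pow 2).fun_add (dAT.fun_pow 2)))
  refine hderiv.deriv.trans ?_
  simp only [Nat.cast_ofNat, Nat.add_one_sub_one, pow_one]
  field

lemma pdT_gowdyEnergyFlux :
    pdT (gowdyEnergyFlux U A) R θ =
      2 * (pdT (pdR U) R θ * pdT U R θ + pdR U R θ * pdT (pdT U) R θ)
        + exp (4 * U R θ) / (2 * R ^ 2)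
          * (4 * pdT U R θ * (pdR A R θ * pdT A R θ)
            + pdT (pdR A) R θ * pdT A R θ + pdR A R θ * pdT (pdT A) R θ) := by
  have dU := hasDerivAt_pdT (hU.differentiable two_ne_zero (R, θ))
  have dUR := hasDerivAt_pdT (differentiable_pdR hU (R, θ))
  have dUT := hasDerivAt_pdT (differentiable_pdT hU (R, θ))
  have dAR := hasDerivAt_pdT (differentiable_pdR hA (R, θ))
  have dAT := hasDerivAt_pdT (differentiable_pdT hA (R, θ))
  have hderiv := ((dUR.fun_mul dUT).const_mul 2).fun_add
    (((dU.const_mul 4).exp.div_const (2 * R ^ 2)).fun_mul (dAR.fun_mul dAT))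
  refine hderiv.deriv.trans ?_
  ring

omit hA in
lemma IsGowdyAt.wave_U_expanded (h : IsGowdyAt U A R θ) :
    pdR U R θ + R * pdR (pdR U) R θ - R * pdT (pdT U) R θ =
      exp (4 * U R θ) / (2 * R) * ((pdR A R θ) ^ 2 - (pdT A R θ) ^ 2) := by
  have dUR := hasDerivAt_pdR (differentiable_pdR hU (R, θ))
  have dUT := hasDerivAt_pdT (differentiable_pdT hU (R, θ))
  rw [← h.wave_U, ((hasDerivAt_id' R).fun_mul dUR).deriv, (dUT.const_mul R).deriv, one_mul]

omit hU in
lemma IsGowdyAt.wave_A_expanded (h : IsGowdyAt U A R θ) (hR : R ≠ 0) :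
    -(R ^ 2)⁻¹ * pdR A R θ + R⁻¹ * pdR (pdR A) R θ - R⁻¹ * pdT (pdT A) R θ =
      4 / R * (-(pdR U R θ * pdR A R θ) + pdT U R θ * pdT A R θ) := by
  have dAR := hasDerivAt_pdR (differentiable_pdR hA (R, θ))
  have dAT := hasDerivAt_pdT (differentiable_pdT hA (R, θ))
  rw [← h.wave_A, ((hasDerivAt_inv hR).fun_mul dAR).deriv, (dAT.const_mul R⁻¹).deriv]

theorem IsGowdyAt.pdR_energyDensity_sub_pdT_energyFlux (h : IsGowdyAt U A R θ) (hR : R ≠ 0) :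
    pdR (gowdyEnergyDensity U A) R θ - pdT (gowdyEnergyFlux U A) R θ =
      -gowdyDissipation U A R θ := by
  have hwave_U := h.wave_U_expanded hU
  have hwave_A := h.wave_A_expanded hA hR
  rw [pdR_gowdyEnergyDensity hU hA hR, pdT_gowdyEnergyFlux hU hA, pdR_pdT_comm hU,
    pdR_pdT_comm hA, gowdyDissipation]
  linear_combination (norm := field) (2 * pdR U R θ / R) * hwave_U
    + (exp (4 * U R θ) * pdR A R θ / (2 * R)) * hwave_A

theorem gowdyEnergy_add_integral_gowdyDissipation (hUper : ∀ R, Function.Periodic (U R) c)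
    (hAper : ∀ R, Function.Periodic (A R) c) {R₁ R₂ : ℝ} (hR : ∀ R ∈ uIcc R₁ R₂, R ≠ 0)
    (hsol : ∀ R ∈ uIcc R₁ R₂, ∀ θ, IsGowdyAt U A R θ) :
    gowdyEnergy U A c R₂ + ∫ R in R₁..R₂, ∫ θ in (0 : ℝ)..c, gowdyDissipation U A R θ =
      gowdyEnergy U A c R₁ :=
  integral_add_integral_integral_eq_of_pdR_sub_pdT_eq_neg
    (fun p hp => differentiableAt_gowdyEnergyDensity hU hA (hR p.1 hp.1))
    (fun p hp => differentiableAt_gowdyEnergyFlux hU hA (hR p.1 hp.1))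
    ((continuousOn_gowdyDissipation (hU.of_le one_le_two) (hA.of_le one_le_two)).mono
      fun p hp => hR p.1 hp.1)
    (fun R _ => (periodic_gowdyEnergyFlux hUper hAper R).eq)
    (fun R hR' θ _ => (hsol R hR' θ).pdR_energyDensity_sub_pdT_energyFlux hU hA (hR R hR'))

end Gowdy

theorem stmt1_general {R₀ c : ℝ} (hR₀ : 0 < R₀) (hc : 0 ≤ c) {U A : ℝ → ℝ → ℝ}
    (hU : ContDiff ℝ 2 (Function.uncurry U)) (hA : ContDiff ℝ 2 (Function.uncurry A))
    (hUper : ∀ R, Function.Periodic (U R) c) (hAper : ∀ R, Function.Periodic (A R) c)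
    (hsol : ∀ R, R₀ ≤ R → ∀ θ, IsGowdyAt U A R θ) :
    AntitoneOn (gowdyEnergy U A c) (Ici R₀) ∧
      ∫⁻ R in Ioi R₀, ENNReal.ofReal (∫ θ in (0 : ℝ)..c, gowdyDissipation U A R θ)
        ≤ ENNReal.ofReal (gowdyEnergy U A c R₀) := by
  have henergy {R₁ R₂ : ℝ} (h₁ : R₀ ≤ R₁) (h₁₂ : R₁ ≤ R₂) :
      gowdyEnergy U A c R₂ + ∫ R in R₁..R₂, ∫ θ in (0 : ℝ)..c, gowdyDissipation U A R θ =
        gowdyEnergy U A c R₁ := by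
    have hge : ∀ R ∈ uIcc R₁ R₂, R₀ ≤ R := fun R hR => h₁.trans (uIcc_of_le h₁₂ ▸ hR).1
    exact gowdyEnergy_add_integral_gowdyDissipation hU hA hUper hAper
      (fun R hR => (hR₀.trans_le (hge R hR)).ne') (fun R hR => hsol R (hge R hR))
  have hnonneg : ∀ R ∈ Ici R₀, 0 ≤ ∫ θ in (0 : ℝ)..c, gowdyDissipation U A R θ := fun R hR =>
    intervalIntegral.integral_nonneg hc fun θ _ =>
      gowdyDissipation_nonneg U A (hR₀.le.trans hR) θ
  have hcont : ContinuousOn (fun R => ∫ θ in (0 : ℝ)..c, gowdyDissipation U A R θ) (Ici R₀) :=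
    continuousOn_intervalIntegral_right
      ((continuousOn_gowdyDissipation (hU.of_le one_le_two) (hA.of_le one_le_two)).mono
        fun p hp => (hR₀.trans_le hp.1).ne') 0 c
  constructor
  · intro R₁ h₁ R₂ _ h₁₂
    rw [← henergy h₁ h₁₂]
    exact le_add_of_nonneg_right
      (intervalIntegral.integral_nonneg h₁₂ fun R hR => hnonneg R (h₁.trans hR.1))
  · refine lintegral_Ioi_ofReal_le_of_intervalIntegral_le
      (hcont.locallyIntegrableOn measurableSet_Ici) hnonneg fun R hR => ?_
    rw [← henergy le_rfl hR]
    exact le_add_of_nonneg_left (gowdyEnergy_nonneg U A hc R)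

theorem stmt1
    (R₀ : ℝ) (hR₀ : 0 < R₀)
    (U A : ℝ → ℝ → ℝ)
    (hU : ContDiff ℝ (⊤ : ℕ∞) (Function.uncurry U))
    (hA : ContDiff ℝ (⊤ : ℕ∞) (Function.uncurry A))
    (hUper : ∀ R θ, U R (θ + 2 * π) = U R θ)
    (hAper : ∀ R θ, A R (θ + 2 * π) = A R θ)
    (eqU : ∀ R, R₀ ≤ R → ∀ θ : ℝ,
      deriv (fun r => r * pdR U r θ) R - deriv (fun t => R * pdT U R t) θ
        = exp (4 * U R θ) / (2 * R) * ((pdR A R θ) ^ 2 - (pdT A R θ) ^ 2))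
    (eqA : ∀ R, R₀ ≤ R → ∀ θ : ℝ,
      deriv (fun r => r⁻¹ * pdR A r θ) R - deriv (fun t => R⁻¹ * pdT A R t) θ
        = 4 / R * (-(pdR U R θ * pdR A R θ) + pdT U R θ * pdT A R θ))
    (E : ℝ → ℝ)
    (hE : ∀ R, E R = ∫ θ in (0:ℝ)..(2 * π),
      (pdR U R θ) ^ 2 + (pdT U R θ) ^ 2
        + exp (4 * U R θ) / (4 * R ^ 2) * ((pdR A R θ) ^ 2 + (pdT A R θ) ^ 2))
 :
    (∀ R, R₀ ≤ R → E R ≤ E R₀)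
      ∧ ∫⁻ R in Set.Ioi R₀, ENNReal.ofReal (∫ θ in (0:ℝ)..(2 * π),
          2 / R * (pdR U R θ) ^ 2 + exp (4 * U R θ) / (2 * R ^ 3) * (pdT A R θ) ^ 2)
        ≤ ENNReal.ofReal (E R₀) := by
  obtain rfl : E = gowdyEnergy U A (2 * π) := funext hE
  have h := stmt1_general hR₀ two_pi_pos.le (contDiff_infty.1 hU 2) (contDiff_infty.1 hA 2) hUper
    hAper fun R hR θ => ⟨eqU R hR θ, eqA R hR θ⟩
  exact ⟨fun R hR => h.1 self_mem_Ici hR hR, h.2⟩
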